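/- arXiv:1505.06354 — 2 statements merged into one kernel-verified Lean document; each statement's English description precedes it below -/
import Mathlib

section
/- Let y ∈ ℝ^N and let X be an N×p real matrix of full column rank p < N, partitioned row-wise into K blocks X_k ∈ ℝ^{n_k×p} with corresponding response blocks y_k ∈ ℝ^{n_k}. For each k, let β̂_{n_k,k} = (X_kᵀX_k)⁻ X_kᵀ y_k, where (X_kᵀX_k)⁻ is any generalized inverse of X_kᵀX_k. Then the combined estimator β̂ = (Σ_{k=1}^K X_kᵀX_k)⁻¹ Σ_{k=1}^K X_kᵀX_k β̂_{n_k,k} and the sum of squared errors SSE = Σ_{k=1}^K y_kᵀy_k − (Σ_{k=1}^K X_kᵀX_k β̂_{n_k,k})ᵀ (Σ_{k=1}^K X_kᵀX_k)⁻¹ (Σ_{k=1}^K X_kᵀX_k β̂_{n_k,k}) are invariant to the choices of generalized inverses; in fact β̂ = (XᵀX)⁻¹Xᵀy and SSE = yᵀy − yᵀX(XᵀX)⁻¹Xᵀy. -/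
open Matrix

/-- Divide-and-conquer least squares: with `X` the row-wise stacking of the blocks `Xb k`
(of full column rank `p < N`) and `y` the stacking of the `yb k`, the combined estimator
`β̂ = (Σ XᵀₖXₖ)⁻¹ Σ XᵀₖXₖ β̂ₖ` with subset estimators `β̂ₖ = (XᵀₖXₖ)⁻ Xᵀₖ yₖ` and the
corresponding SSE are invariant to the choices of generalized inverses `G k`;
indeed `β̂ = (XᵀX)⁻¹Xᵀy` and `SSE = yᵀy − yᵀX(XᵀX)⁻¹Xᵀy`. -/
theorem stmt0 {K p : ℕ} (n : Fin K → ℕ)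
    (Xb : ∀ k, Matrix (Fin (n k)) (Fin p) ℝ)
    (yb : ∀ k, Fin (n k) → ℝ)
    (X : Matrix ((k : Fin K) × Fin (n k)) (Fin p) ℝ)
    (y : (k : Fin K) × Fin (n k) → ℝ)
    (hX : ∀ k i j, X ⟨k, i⟩ j = Xb k i j)
    (hy : ∀ k i, y ⟨k, i⟩ = yb k i)
    (hrank : X.rank = p)
    (hp : p < ∑ k, n k)
    (G : ∀ _ : Fin K, Matrix (Fin p) (Fin p) ℝ)
    (hG : ∀ k, ((Xb k)ᵀ * Xb k) * G k * ((Xb k)ᵀ * Xb k) = (Xb k)ᵀ * Xb k) :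
    (∑ k, (Xb k)ᵀ * Xb k)⁻¹ *ᵥ
        (∑ k, ((Xb k)ᵀ * Xb k) *ᵥ (G k *ᵥ ((Xb k)ᵀ *ᵥ yb k))) =
      (Xᵀ * X)⁻¹ *ᵥ (Xᵀ *ᵥ y) ∧
    (∑ k, yb k ⬝ᵥ yb k) -
        (∑ k, ((Xb k)ᵀ * Xb k) *ᵥ (G k *ᵥ ((Xb k)ᵀ *ᵥ yb k))) ⬝ᵥ
          ((∑ k, (Xb k)ᵀ * Xb k)⁻¹ *ᵥ
            (∑ k, ((Xb k)ᵀ * Xb k) *ᵥ (G k *ᵥ ((Xb k)ᵀ *ᵥ yb k)))) =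
      y ⬝ᵥ y - y ⬝ᵥ (X *ᵥ ((Xᵀ * X)⁻¹ *ᵥ (Xᵀ *ᵥ y))) := by
  have key : ∀ k, ((Xb k)ᵀ * Xb k) *ᵥ (G k *ᵥ ((Xb k)ᵀ *ᵥ yb k)) = (Xb k)ᵀ *ᵥ yb k := by
    intro k
    have h0 : (((Xb k)ᵀ * Xb k) * G k - 1) * ((Xb k)ᴴ * Xb k) = 0 := by
      rw [conjTranspose_eq_transpose_of_trivial, Matrix.sub_mul, Matrix.one_mul, hG k, sub_self]
    rw [Matrix.mul_conjTranspose_mul_self_eq_zero, conjTranspose_eq_transpose_of_trivial,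
      Matrix.sub_mul, Matrix.one_mul, sub_eq_zero] at h0
    rw [Matrix.mulVec_mulVec, Matrix.mulVec_mulVec, h0]
  have hA : (∑ k, (Xb k)ᵀ * Xb k) = Xᵀ * X := by
    ext i j
    simp [Matrix.sum_apply, Matrix.mul_apply, Fintype.sum_sigma, hX]
  have hv : (∑ k, (Xb k)ᵀ *ᵥ yb k) = Xᵀ *ᵥ y := by
    ext i
    simp [Finset.sum_apply, Matrix.mulVec, dotProduct, Fintype.sum_sigma, hX, hy]
  have hyy : (∑ k, yb k ⬝ᵥ yb k) = y ⬝ᵥ y := by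
    simp [dotProduct, Fintype.sum_sigma, hy]
  simp only [key, hA, hv, hyy, true_and]
  rw [Matrix.dotProduct_mulVec y X, Matrix.mulVec_transpose]
end

section
/- Let λ > 0, V_0 = λ I_p, β̂_0 = 0, and for k = 1,…,κ−1 define V_k = V_{k−1} + X_kᵀX_k and β̂_k = V_k⁻¹ (X_kᵀ y_k + V_{k−1} β̂_{k−1}) (ridge-regularized online updates). Assume V_κ − λ I_p = Σ_{ℓ=1}^κ X_ℓᵀX_ℓ is invertible, where V_κ = V_{κ−1} + X_κᵀX_κ. Then the bias-corrected estimator β̂_κ = (X_κᵀX_κ + V_{κ−1} − λ I_p)⁻¹ (X_κᵀ y_κ + W_{κ−1}), where W_{κ−1} = Σ_{ℓ=1}^{κ−1} X_ℓᵀ y_ℓ, equals the unregularized least squares estimator (Σ_{ℓ=1}^κ X_ℓᵀX_ℓ)⁻¹ Σ_{ℓ=1}^κ X_ℓᵀ y_ℓ based on the cumulative data; moreover, with SSE_0 = 0, SSE_k = SSE_{k−1} + y_kᵀy_k + β̂_{k−1}ᵀ V_{k−1} β̂_{k−1} − β̂_kᵀ V_k β̂_k for k < κ and SSE_κ = SSE_{κ−1}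 + y_κᵀy_κ + β̂_{κ−1}ᵀ V_{κ−1} β̂_{κ−1} − β̂_κᵀ (V_κ − λ I_p) β̂_κ, one has SSE_κ = Σ_{ℓ=1}^κ y_ℓᵀy_ℓ − β̂_κᵀ (Σ_{ℓ=1}^κ X_ℓᵀX_ℓ) β̂_κ, the unregularized residual sum of squares. -/
open Matrix

/-- Ridge-regularized online updating with bias removal at accumulation point `κ`:
starting from `V 0 = λ Iₚ`, `b 0 = 0`, updating `V k = V (k−1) + XᵀₖXₖ`,
`b k = V k⁻¹ (Xᵀₖyₖ + V (k−1) b (k−1))` for `1 ≤ k < κ`, and defining the bias-corrected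
estimator `b κ = (XᵀκXκ + V (κ−1) − λ Iₚ)⁻¹ (Xᵀκyκ + W (κ−1))`, one recovers the
unregularized least squares estimator and the unregularized residual sum of squares. -/
theorem stmt5 {p : ℕ} (n : ℕ → ℕ)
    (X : ∀ k, Matrix (Fin (n k)) (Fin p) ℝ)
    (y : ∀ k, Fin (n k) → ℝ)
    (lam : ℝ) (hlam : 0 < lam) (κ : ℕ) (hκ : 1 ≤ κ)
    (V : ℕ → Matrix (Fin p) (Fin p) ℝ) (b : ℕ → Fin p → ℝ) (SSE : ℕ → ℝ)
    (hV0 : V 0 = lam • (1 : Matrix (Fin p) (Fin p) ℝ))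
    (hb0 : b 0 = 0) (hSSE0 : SSE 0 = 0)
    (hV : ∀ k, 1 ≤ k → k ≤ κ → V k = V (k - 1) + (X k)ᵀ * X k)
    (hb : ∀ k, 1 ≤ k → k < κ →
      b k = (V k)⁻¹ *ᵥ ((X k)ᵀ *ᵥ y k + V (k - 1) *ᵥ b (k - 1)))
    (hinv : IsUnit (V κ - lam • (1 : Matrix (Fin p) (Fin p) ℝ)))
    (hbκ : b κ = ((X κ)ᵀ * X κ + V (κ - 1) - lam • (1 : Matrix (Fin p) (Fin p) ℝ))⁻¹ *ᵥ
      ((X κ)ᵀ *ᵥ y κ + ∑ ℓ ∈ Finset.Icc 1 (κ - 1), (X ℓ)ᵀ *ᵥ y ℓ))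
    (hSSE : ∀ k, 1 ≤ k → k < κ →
      SSE k = SSE (k - 1) + y k ⬝ᵥ y k + b (k - 1) ⬝ᵥ (V (k - 1) *ᵥ b (k - 1))
        - b k ⬝ᵥ (V k *ᵥ b k))
    (hSSEκ : SSE κ = SSE (κ - 1) + y κ ⬝ᵥ y κ + b (κ - 1) ⬝ᵥ (V (κ - 1) *ᵥ b (κ - 1))
      - b κ ⬝ᵥ ((V κ - lam • (1 : Matrix (Fin p) (Fin p) ℝ)) *ᵥ b κ)) :
    b κ = (∑ ℓ ∈ Finset.Icc 1 κ, (X ℓ)ᵀ * X ℓ)⁻¹ *ᵥ ∑ ℓ ∈ Finset.Icc 1 κ, (X ℓ)ᵀ *ᵥ y ℓ ∧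
    SSE κ = (∑ ℓ ∈ Finset.Icc 1 κ, y ℓ ⬝ᵥ y ℓ)
      - b κ ⬝ᵥ ((∑ ℓ ∈ Finset.Icc 1 κ, (X ℓ)ᵀ * X ℓ) *ᵥ b κ) := by
  obtain ⟨m, rfl⟩ : ∃ m, κ = m + 1 := ⟨κ - 1, by omega⟩
  have hVs : ∀ k, k ≤ m + 1 →
      V k = lam • (1 : Matrix (Fin p) (Fin p) ℝ) + ∑ ℓ ∈ Finset.Icc 1 k, (X ℓ)ᵀ * X ℓ := by
    intro k
    induction k with
    | zero => intro _; simp [hV0]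
    | succ k ih =>
      intro hk
      rw [hV (k + 1) (by omega) hk, Nat.add_sub_cancel, ih (by omega),
        Finset.sum_Icc_succ_top (by omega), add_assoc]
  have hS : ∀ k, k ≤ m →
      SSE k = (∑ ℓ ∈ Finset.Icc 1 k, y ℓ ⬝ᵥ y ℓ) - b k ⬝ᵥ (V k *ᵥ b k) := by
    intro k
    induction k with
    | zero => intro _; simp [hb0, hSSE0]
    | succ k ih =>
      intro hk
      rw [hSSE (k + 1) (by omega) (by omega), Nat.add_sub_cancel, ih (by omega),
        Finset.sum_Icc_succ_top (by omega)]
      ring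
  have hG : V (m + 1) - lam • (1 : Matrix (Fin p) (Fin p) ℝ)
      = ∑ ℓ ∈ Finset.Icc 1 (m + 1), (X ℓ)ᵀ * X ℓ := by
    rw [hVs (m + 1) le_rfl, add_sub_cancel_left]
  constructor
  · rw [hbκ, add_comm ((X (m + 1))ᵀ * X (m + 1)), ← hV (m + 1) hκ le_rfl, hG,
      Nat.add_sub_cancel, Finset.sum_Icc_succ_top (f := fun ℓ => (X ℓ)ᵀ *ᵥ y ℓ) (by omega),
      add_comm ((X (m + 1))ᵀ *ᵥ y (m + 1))]
  · rw [hSSEκ, hG, Nat.add_sub_cancel, hS m le_rfl,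
      Finset.sum_Icc_succ_top (f := fun ℓ => y ℓ ⬝ᵥ y ℓ) (by omega)]
    ring
end
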